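/- Let z(n,k) denote the number of ordered labeled trees on the vertex set {0,1,...,n} that consist of a decreasing tree with k edges (i.e., the maximal decreasing subtree from the root) together with n-k additional increasing leaves attached to vertices of that decreasing tree. Then for all integers n, k with 1 ≤ k < n, the recursion z(n,k) = n·z(n-1,k) + (n+k-1)·z(n-1,k-1) holds. -/

import Mathlib

/-- An ordered labeled tree: a root label together with an ordered list of subtrees. -/
inductive OTree : Type
  | node : ℕ → List OTree → OTree

namespace OTree

/-- The label of the root. -/
def root : OTree → ℕ
  | node a _ => a

/-- The list of subtrees of the root (in order). -/
def children : OTree → List OTree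
  | node _ ts => ts

mutual
  /-- The list of all vertex labels of the tree. -/
  def labels : OTree → List ℕ
    | node a ts => a :: labelsList ts
  def labelsList : List OTree → List ℕ
    | [] => []
    | t :: ts => labels t ++ labelsList ts
end

/-- The number of vertices of the tree. -/
def size (T : OTree) : ℕ := T.labels.length

mutual
  /-- The maximal decreasing subtree from the root: keep exactly the children whose
  label is smaller than their parent's label, recursively. -/
  def md : OTree → OTree
    | node a ts => node a (mdList a ts)
  def mdList : ℕ → List OTree → List OTree
    | _, [] => []
    | a, t :: ts => (if t.root < a then [md t] else []) ++ mdList a ts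
end

mutual
  /-- `IsZ T` states that every vertex of `T` not in the maximal decreasing subtree is a
  leaf (attached by an increasing edge to a vertex of the maximal decreasing subtree). -/
  def IsZ : OTree → Prop
    | node a ts => IsZList a ts
  def IsZList : ℕ → List OTree → Prop
    | _, [] => True
    | a, t :: ts => (if t.root < a then IsZ t else t.children = []) ∧ IsZList a ts
end

/-- `T.OnRange n` : the vertices of `T` are labeled by distinct labels and the set of
labels is exactly `{0, 1, …, n}`. -/
def OnRange (T : OTree) (n : ℕ) : Prop :=
  T.labels.Nodup ∧ ∀ i, i ∈ T.labels ↔ i ≤ n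

end OTree

/-- `T` is a member of `Z_{n,k}`: an ordered labeled tree on `{0,…,n}` consisting of a
decreasing tree with `k` edges (its maximal decreasing subtree, with `k+1` vertices)
together with `n-k` additional increasing leaves attached to it. -/
def MemZ (T : OTree) (n k : ℕ) : Prop :=
  T.OnRange n ∧ T.md.size = k + 1 ∧ T.IsZ

namespace OTree

theorem ind2 {P : OTree → Prop} {Q : List OTree → Prop}
    (h1 : ∀ a ts, Q ts → P (node a ts)) (h2 : Q [])
    (h3 : ∀ t ts, P t → Q ts → Q (t :: ts)) : (∀ t, P t) ∧ ∀ ts, Q ts := by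
  have hP : ∀ t, P t := fun t =>
    OTree.rec (motive_1 := P) (motive_2 := Q) h1 h2 h3 t
  refine ⟨hP, fun ts => ?_⟩
  induction ts with
  | nil => exact h2
  | cons t ts ih => exact h3 t ts (hP t) ih

/-! ### Relabelling -/
mutual
  def rel (f : ℕ → ℕ) : OTree → OTree
    | node a ts => node (f a) (relList f ts)
  def relList (f : ℕ → ℕ) : List OTree → List OTree
    | [] => []
    | t :: ts => rel f t :: relList f ts
end

theorem root_rel (f : ℕ → ℕ) (t : OTree) : (rel f t).root = f t.root := by
  cases t; simp [rel, root]

theorem relList_eq_nil (f : ℕ → ℕ) (ts : List OTree) : relList f ts = [] ↔ ts = [] := by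
  cases ts <;> simp [relList]

theorem children_rel (f : ℕ → ℕ) (t : OTree) :
    (rel f t).children = [] ↔ t.children = [] := by
  cases t; simp [rel, children, relList_eq_nil]

theorem labels_rel_aux (f : ℕ → ℕ) : (∀ t, (rel f t).labels = t.labels.map f) ∧
    ∀ ts, labelsList (relList f ts) = (labelsList ts).map f := by
  apply ind2
  · intro a ts h; simp [rel, labels, h]
  · simp [relList, labelsList]
  · intro t ts h1 h2; simp [relList, labelsList, h1, h2]

theorem labels_rel (f : ℕ → ℕ) (t : OTree) : (rel f t).labels = t.labels.map f :=
  (labels_rel_aux f).1 t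

theorem md_rel_aux (f : ℕ → ℕ) (hf : StrictMono f) : (∀ t, (rel f t).md = rel f t.md) ∧
    ∀ ts, ∀ a, mdList (f a) (relList f ts) = relList f (mdList a ts) := by
  apply ind2
  · intro a ts h; simp [rel, md, h]
  · simp [relList, mdList]
  · intro t ts h1 h2 a
    by_cases h : t.root < a <;>
      simp [relList, mdList, h1, h2, root_rel, hf.lt_iff_lt, h]

theorem size_md_rel (f : ℕ → ℕ) (hf : StrictMono f) (t : OTree) :
    (rel f t).md.size = t.md.size := by
  simp [(md_rel_aux f hf).1 t, size, labels_rel]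

theorem isZ_rel_aux (f : ℕ → ℕ) (hf : StrictMono f) : (∀ t, (rel f t).IsZ ↔ t.IsZ) ∧
    ∀ ts, ∀ a, IsZList (f a) (relList f ts) ↔ IsZList a ts := by
  apply ind2
  · intro a ts h; simp [rel, IsZ, h]
  · simp [relList, IsZList]
  · intro t ts h1 h2 a
    by_cases h : t.root < a <;>
      simp [relList, IsZList, h1, h2, root_rel, hf.lt_iff_lt, h, children_rel]

theorem rel_inj_aux (f : ℕ → ℕ) (hf : Function.Injective f) :
    (∀ t t', rel f t = rel f t' → t = t') ∧
    ∀ ts ts', relList f ts = relList f ts' → ts = ts' := by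
  apply ind2
  · intro a ts h t' ht
    cases t' with
    | node b us =>
      simp only [rel, node.injEq] at ht
      rw [hf ht.1, h _ ht.2]
  · intro ts' h; exact ((relList_eq_nil f ts').1 (by rw [← h]; simp [relList])).symm
  · intro t ts h1 h2 ts' h
    cases ts' with
    | nil => simp [relList] at h
    | cons u us =>
      simp only [relList, List.cons.injEq] at h
      rw [h1 _ h.1, h2 _ h.2]

theorem rel_surj_aux (f : ℕ → ℕ) :
    (∀ t : OTree, (∀ x ∈ t.labels, ∃ y, f y = x) → ∃ t', t = rel f t') ∧
    ∀ ts, (∀ x ∈ labelsList ts, ∃ y, f y = x) → ∃ ts', ts = relList f ts' := by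
  apply ind2
  · intro a ts h hx
    obtain ⟨ts', rfl⟩ := h (fun x hx' => hx x (by simp [labels, hx']))
    obtain ⟨b, rfl⟩ := hx a (by simp [labels])
    exact ⟨node b ts', by simp [rel]⟩
  · intro _; exact ⟨[], by simp [relList]⟩
  · intro t ts h1 h2 hx
    obtain ⟨t', rfl⟩ := h1 (fun x hx' => hx x (by simp [labelsList, hx']))
    obtain ⟨ts', rfl⟩ := h2 (fun x hx' => hx x (by simp [labelsList, hx']))
    exact ⟨t' :: ts', by simp [relList]⟩

def skip (c i : ℕ) : ℕ := if i < c then i else i + 1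

theorem skip_mono (c : ℕ) : StrictMono (skip c) := by
  intro i j h
  unfold skip
  split_ifs <;> omega

theorem skip_surj (c x : ℕ) (h : x ≠ c) : ∃ y, skip c y = x := by
  by_cases hx : x < c
  · exact ⟨x, by simp [skip, hx]⟩
  · refine ⟨x - 1, ?_⟩
    unfold skip
    split_ifs <;> omega

/-- Like `MemZ` but with the label `c` missing. -/
def W (n c k : ℕ) (T : OTree) : Prop :=
  (T.labels.Nodup ∧ ∀ i, i ∈ T.labels ↔ i ≤ n ∧ i ≠ c) ∧ T.md.size = k + 1 ∧ T.IsZ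

theorem W_rel (n c k : ℕ) (hn : 1 ≤ n) (hc : c ≤ n) (T : OTree) :
    W n c k (rel (skip c) T) ↔ MemZ T (n - 1) k := by
  unfold W MemZ OnRange
  rw [size_md_rel _ (skip_mono c), (isZ_rel_aux _ (skip_mono c)).1, labels_rel,
    List.nodup_map_iff (skip_mono c).injective]
  refine and_congr_left fun _ => and_congr_right fun _ => ⟨fun h i => ?_, fun h i => ?_⟩
  · have h1 := h (skip c i)
    rw [List.mem_map_of_injective (skip_mono c).injective] at h1
    rw [h1]
    unfold skip
    split_ifs <;> omega
  · by_cases hi : i = c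
    · simp only [List.mem_map, hi, ne_eq, not_true_eq_false, and_false, iff_false, not_exists,
        not_and]
      intro x _
      unfold skip
      split_ifs <;> omega
    · obtain ⟨y, rfl⟩ := skip_surj c i hi
      rw [List.mem_map_of_injective (skip_mono c).injective, h]
      revert hi
      unfold skip
      split_ifs <;> omega

theorem W_surj (n c k : ℕ) (T : OTree) (h : W n c k T) : ∃ T', T = rel (skip c) T' :=
  (rel_surj_aux _).1 T fun x hx => skip_surj c x ((h.1.2 x).1 hx).2

theorem onRange_perm {T T' : OTree} {n c : ℕ} (hc : c ≤ n) (h : T.labels.Perm (c :: T'.labels)) :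
    T.OnRange n ↔ (T'.labels.Nodup ∧ ∀ i, i ∈ T'.labels ↔ i ≤ n ∧ i ≠ c) := by
  unfold OnRange
  rw [h.nodup_iff, List.nodup_cons]
  simp only [h.mem_iff, List.mem_cons]
  constructor
  · rintro ⟨⟨h1, h2⟩, h3⟩
    refine ⟨h2, fun i => ?_⟩
    have := h3 i
    by_cases hi : i = c
    · subst hi; simp [h1]
    · simp [← this, hi]
  · rintro ⟨h1, h2⟩
    refine ⟨⟨by simp [h2], h1⟩, fun i => ?_⟩
    rw [h2]
    by_cases hi : i = c
    · simp [hi, hc]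
    · simp [hi]

/-! ### Inserting the leaf `0` -/
mutual
  def ins : OTree → List OTree
    | node a ts => (insList a ts).map (node a)
  def insList : ℕ → List OTree → List (List OTree)
    | _, [] => [[node 0 []]]
    | a, t :: ts => (node 0 [] :: t :: ts) ::
        ((if t.root < a then ins t else []).map (· :: ts) ++ (insList a ts).map (t :: ·))
end

theorem root_mem (t : OTree) : t.root ∈ t.labels := by
  cases t; simp [root, labels]

theorem root_ins {t t' : OTree} (h : t' ∈ ins t) : t'.root = t.root := by
  cases t
  simp only [ins, List.mem_map] at h
  obtain ⟨_, _, rfl⟩ := h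
  simp [root]

theorem insList_ne_nil (a : ℕ) (ts : List OTree) : [] ∉ insList a ts := by
  cases ts <;> simp [insList]

theorem size_node (a : ℕ) (ts : List OTree) : (node a ts).size = (labelsList ts).length + 1 := by
  simp [size, labels]

theorem labelsList_append (l l' : List OTree) :
    labelsList (l ++ l') = labelsList l ++ labelsList l' := by
  induction l with
  | nil => simp [labelsList]
  | cons t ts ih => simp [labelsList, ih]

theorem length_ins_aux :
    (∀ t : OTree, t.IsZ → (ins t).length + 1 = t.size + t.md.size) ∧
    ∀ ts, ∀ a, IsZList a ts → (insList a ts).length =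
      1 + (labelsList ts).length + (labelsList (mdList a ts)).length := by
  apply ind2
  · intro a ts h hz
    have := h a (by simpa [IsZ] using hz)
    simp only [ins, md, size_node, List.length_map, this]
    omega
  · simp [insList, labelsList, mdList]
  · intro t ts h1 h2 a hz
    simp only [IsZList] at hz
    have h2' := h2 a hz.2
    by_cases h : t.root < a
    · have h1' := h1 (by simpa [h] using hz.1)
      simp only [size] at h1'
      simp only [insList, labelsList, mdList, h, if_true, List.length_cons, List.length_append,
        List.length_map, labelsList_append, h2', List.length_nil]
      omega
    · have hc := hz.1
      rw [if_neg h] at hc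
      cases t with
      | node b us =>
        simp only [children] at hc
        subst hc
        simp only [insList, labelsList, mdList, h, if_false, List.length_cons, List.length_append,
          List.length_map, h2', List.length_nil, labels, List.nil_append, List.map_nil]
        omega

theorem labels_ins_aux :
    (∀ t : OTree, ∀ t' ∈ ins t, t'.labels.Perm (0 :: t.labels)) ∧
    ∀ ts, ∀ a, ∀ ts' ∈ insList a ts, (labelsList ts').Perm (0 :: labelsList ts) := by
  apply ind2
  · intro a ts h t' ht
    simp only [ins, List.mem_map] at ht
    obtain ⟨us, hus, rfl⟩ := ht
    simp only [labels]
    exact ((h a us hus).cons a).trans (List.Perm.swap _ _ _)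
  · simp [insList, labelsList, labels]
  · intro t ts h1 h2 a ts' h
    simp only [insList, List.mem_cons, List.mem_append, List.mem_map] at h
    rcases h with rfl | ⟨u, hu, rfl⟩ | ⟨u, hu, rfl⟩
    · simp [labelsList, labels]
    · split_ifs at hu
      · simp only [labelsList]
        exact (h1 u hu).append_right _
      · simp at hu
    · simp only [labelsList]
      exact ((h2 a u hu).append_left _).trans List.perm_middle

theorem nodup_ins_aux :
    (∀ t : OTree, 0 ∉ t.labels → (ins t).Nodup) ∧
    ∀ ts, ∀ a, 0 ∉ labelsList ts → (insList a ts).Nodup := by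
  apply ind2
  · intro a ts h h0
    simp only [labels, List.mem_cons, not_or] at h0
    simp only [ins]
    exact (h a h0.2).map (fun x y hxy => by simpa using hxy)
  · simp [insList]
  · intro t ts h1 h2 a h0
    simp only [labelsList, List.mem_append, not_or] at h0
    have hr : t.root ≠ 0 := fun h => h0.1 (h ▸ root_mem t)
    have hne : ∀ u ∈ (if t.root < a then ins t else []), u ∈ ins t := by
      intro u hu
      split_ifs at hu
      · exact hu
      · simp at hu
    simp only [insList, List.nodup_cons, List.nodup_append, List.mem_append, List.mem_map]
    refine ⟨?_, ?_, ?_, ?_⟩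
    · rintro (⟨u, hu, h⟩ | ⟨u, hu, h⟩)
      · simp only [List.cons.injEq] at h
        have := root_ins (hne u hu)
        rw [h.1] at this
        exact hr (by rw [← this]; rfl)
      · simp only [List.cons.injEq] at h
        apply hr; rw [h.1]; rfl
    · refine List.Nodup.map (fun x y hxy => by simpa using hxy) ?_
      split_ifs
      · exact h1 h0.1
      · simp
    · exact (h2 a h0.2).map (fun x y hxy => by simpa using hxy)
    · rintro _ ⟨u, hu, rfl⟩ _ ⟨v, hv, rfl⟩ h
      simp only [List.cons.injEq] at h
      have := (labels_ins_aux.1 t u (hne u hu)).mem_iff (a := 0)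
      rw [h.1] at this
      simp [h0.1] at this

theorem md_ins_aux :
    (∀ t : OTree, 0 ∉ t.labels → ∀ t' ∈ ins t, t'.md.size = t.md.size + 1) ∧
    ∀ ts, ∀ a, a ≠ 0 → 0 ∉ labelsList ts → ∀ ts' ∈ insList a ts,
      (labelsList (mdList a ts')).length = (labelsList (mdList a ts)).length + 1 := by
  apply ind2
  · intro a ts h h0 t' ht
    simp only [ins, List.mem_map] at ht
    obtain ⟨us, hus, rfl⟩ := ht
    simp only [labels, List.mem_cons, not_or] at h0
    simp only [md, size_node, h a (Ne.symm h0.1) h0.2 us hus]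
  · intro a ha _ ts' h
    simp only [insList, List.mem_singleton] at h
    subst h
    simp [mdList, labelsList, root, Nat.pos_of_ne_zero ha, md, labels]
  · intro t ts h1 h2 a ha h0 ts' h
    simp only [labelsList, List.mem_append, not_or] at h0
    simp only [insList, List.mem_cons, List.mem_append, List.mem_map] at h
    rcases h with rfl | ⟨u, hu, rfl⟩ | ⟨u, hu, rfl⟩
    · simp [mdList, labelsList, root, Nat.pos_of_ne_zero ha, md, labels]
    · split_ifs at hu with hlt
      · have := h1 h0.1 u hu
        simp only [size] at this
        have hr := root_ins hu
        simp only [mdList, hr, hlt, if_true, labelsList_append, labelsList, List.length_append,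
          List.append_nil, this]
        omega
      · simp at hu
    · have := h2 a ha h0.2 u hu
      simp only [mdList, labelsList_append, List.length_append, this]
      omega

theorem isZ_ins_aux :
    (∀ t : OTree, 0 ∉ t.labels → ∀ t' ∈ ins t, (t'.IsZ ↔ t.IsZ)) ∧
    ∀ ts, ∀ a, a ≠ 0 → 0 ∉ labelsList ts → ∀ ts' ∈ insList a ts,
      (IsZList a ts' ↔ IsZList a ts) := by
  apply ind2
  · intro a ts h h0 t' ht
    simp only [ins, List.mem_map] at ht
    obtain ⟨us, hus, rfl⟩ := ht
    simp only [labels, List.mem_cons, not_or] at h0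
    simp only [IsZ, h a (Ne.symm h0.1) h0.2 us hus]
  · intro a ha _ ts' h
    simp only [insList, List.mem_singleton] at h
    subst h
    simp [IsZList, IsZ, root, Nat.pos_of_ne_zero ha]
  · intro t ts h1 h2 a ha h0 ts' h
    simp only [labelsList, List.mem_append, not_or] at h0
    simp only [insList, List.mem_cons, List.mem_append, List.mem_map] at h
    rcases h with rfl | ⟨u, hu, rfl⟩ | ⟨u, hu, rfl⟩
    · simp [IsZList, IsZ, root, Nat.pos_of_ne_zero ha]
    · split_ifs at hu with hlt
      · simp only [IsZList, root_ins hu, hlt, if_true, h1 h0.1 u hu]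
      · simp at hu
    · simp only [IsZList, h2 a ha h0.2 u hu]

/-! ### Deleting `0` -/
mutual
  def del : OTree → OTree
    | node a ts => node a (delList ts)
  def delList : List OTree → List OTree
    | [] => []
    | t :: ts => if t.root = 0 then delList ts else del t :: delList ts
end

theorem del_self_aux :
    (∀ t : OTree, 0 ∉ t.labels → del t = t) ∧ ∀ ts, 0 ∉ labelsList ts → delList ts = ts := by
  apply ind2
  · intro a ts h h0
    simp only [labels, List.mem_cons, not_or] at h0
    simp [del, h h0.2]
  · simp [delList]
  · intro t ts h1 h2 h0
    simp only [labelsList, List.mem_append, not_or] at h0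
    have hr : t.root ≠ 0 := fun h => h0.1 (h ▸ root_mem t)
    simp [delList, hr, h1 h0.1, h2 h0.2]

theorem del_ins_aux :
    (∀ t : OTree, 0 ∉ t.labels → ∀ t' ∈ ins t, del t' = t) ∧
    ∀ ts, ∀ a, 0 ∉ labelsList ts → ∀ ts' ∈ insList a ts, delList ts' = ts := by
  apply ind2
  · intro a ts h h0 t' ht
    simp only [ins, List.mem_map] at ht
    obtain ⟨us, hus, rfl⟩ := ht
    simp only [labels, List.mem_cons, not_or] at h0
    simp only [del, h a h0.2 us hus]
  · intro a _ ts' h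
    simp only [insList, List.mem_singleton] at h
    subst h
    simp [delList, root]
  · intro t ts h1 h2 a h0 ts' h
    simp only [labelsList, List.mem_append, not_or] at h0
    have hr : t.root ≠ 0 := fun h => h0.1 (h ▸ root_mem t)
    simp only [insList, List.mem_cons, List.mem_append, List.mem_map] at h
    rcases h with rfl | ⟨u, hu, rfl⟩ | ⟨u, hu, rfl⟩
    · have := del_self_aux.2 (t :: ts) (by simp [labelsList, h0])
      rw [delList]
      simp [root, this]
    · split_ifs at hu with hlt
      · simp [delList, root_ins hu, hr, h1 h0.1 u hu, del_self_aux.2 ts h0.2]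
      · simp at hu
    · simp [delList, hr, h2 a h0.2 u hu, del_self_aux.1 t h0.1]

/-! ### Is `0` a leaf? -/
mutual
  def leafZ : OTree → Prop
    | node a ts => (a = 0 → ts = []) ∧ leafZList ts
  def leafZList : List OTree → Prop
    | [] => True
    | t :: ts => leafZ t ∧ leafZList ts
end

theorem leafZ_self_aux :
    (∀ t : OTree, 0 ∉ t.labels → leafZ t) ∧ ∀ ts, 0 ∉ labelsList ts → leafZList ts := by
  apply ind2
  · intro a ts h h0
    simp only [labels, List.mem_cons, not_or] at h0
    exact ⟨fun ha => absurd ha.symm h0.1, h h0.2⟩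
  · simp [leafZList]
  · intro t ts h1 h2 h0
    simp only [labelsList, List.mem_append, not_or] at h0
    exact ⟨h1 h0.1, h2 h0.2⟩

theorem leafZ_ins_aux :
    (∀ t : OTree, 0 ∉ t.labels → ∀ t' ∈ ins t, leafZ t') ∧
    ∀ ts, ∀ a, 0 ∉ labelsList ts → ∀ ts' ∈ insList a ts, leafZList ts' := by
  apply ind2
  · intro a ts h h0 t' ht
    simp only [ins, List.mem_map] at ht
    obtain ⟨us, hus, rfl⟩ := ht
    simp only [labels, List.mem_cons, not_or] at h0
    exact ⟨fun ha => absurd ha.symm h0.1, h a h0.2 us hus⟩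
  · intro a _ ts' h
    simp only [insList, List.mem_singleton] at h
    subst h
    simp [leafZList, leafZ]
  · intro t ts h1 h2 a h0 ts' h
    simp only [labelsList, List.mem_append, not_or] at h0
    simp only [insList, List.mem_cons, List.mem_append, List.mem_map] at h
    rcases h with rfl | ⟨u, hu, rfl⟩ | ⟨u, hu, rfl⟩
    · simp [leafZList, leafZ, leafZ_self_aux.1 t h0.1, leafZ_self_aux.2 ts h0.2]
    · split_ifs at hu with hlt
      · exact ⟨h1 h0.1 u hu, leafZ_self_aux.2 ts h0.2⟩
      · simp at hu
    · exact ⟨leafZ_self_aux.1 t h0.1, h2 a h0.2 u hu⟩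

/-! ### Adding a first child to `0` -/
mutual
  def addc (c : ℕ) : OTree → OTree
    | node a ts => if a = 0 then node a (node c [] :: ts) else node a (addcList c ts)
  def addcList (c : ℕ) : List OTree → List OTree
    | [] => []
    | t :: ts => if 0 ∈ t.labels then addc c t :: ts else t :: addcList c ts
end

mutual
  def rem : OTree → OTree
    | node a ts => if a = 0 then node a ts.tail else node a (remList ts)
  def remList : List OTree → List OTree
    | [] => []
    | t :: ts => if 0 ∈ t.labels then rem t :: ts else t :: remList ts
end

theorem root_addc (c : ℕ) (t : OTree) : (addc c t).root = t.root := by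
  cases t
  simp only [addc]
  split_ifs <;> simp [root]

theorem labels_addc_aux (c : ℕ) :
    (∀ t : OTree, 0 ∈ t.labels → (addc c t).labels.Perm (c :: t.labels)) ∧
    ∀ ts, 0 ∈ labelsList ts → (labelsList (addcList c ts)).Perm (c :: labelsList ts) := by
  apply ind2
  · intro a ts h h0
    by_cases ha : a = 0
    · simp only [addc, ha, if_true, labels, labelsList, List.cons_append, List.nil_append]
      exact List.Perm.swap _ _ _
    · simp only [addc, ha, if_false, labels]
      simp only [labels, List.mem_cons, Ne.symm ha, false_or] at h0
      exact ((h h0).cons a).trans (List.Perm.swap _ _ _)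
  · simp [labelsList]
  · intro t ts h1 h2 h0
    by_cases ht : 0 ∈ t.labels
    · simp only [addcList, ht, if_true, labelsList]
      exact (h1 ht).append_right _
    · simp only [addcList, ht, if_false, labelsList]
      simp only [labelsList, List.mem_append, ht, false_or] at h0
      exact ((h2 h0).append_left _).trans List.perm_middle

theorem rem_addc_aux (c : ℕ) :
    (∀ t : OTree, 0 ∈ t.labels → rem (addc c t) = t) ∧
    ∀ ts, 0 ∈ labelsList ts → remList (addcList c ts) = ts := by
  apply ind2
  · intro a ts h h0
    by_cases ha : a = 0
    · simp [addc, ha, rem]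
    · simp only [labels, List.mem_cons, Ne.symm ha, false_or] at h0
      simp [addc, ha, rem, h h0]
  · simp [labelsList]
  · intro t ts h1 h2 h0
    by_cases ht : 0 ∈ t.labels
    · have : 0 ∈ (addc c t).labels := by
        rw [((labels_addc_aux c).1 t ht).mem_iff]; simp [ht]
      simp [addcList, ht, remList, this, h1 ht]
    · simp only [labelsList, List.mem_append, ht, false_or] at h0
      simp [addcList, ht, remList, h2 h0]

theorem leafZ_addc_aux (c : ℕ) :
    (∀ t : OTree, 0 ∈ t.labels → ¬ leafZ (addc c t)) ∧
    ∀ ts, 0 ∈ labelsList ts → ¬ leafZList (addcList c ts) := by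
  apply ind2
  · intro a ts h h0
    by_cases ha : a = 0
    · simp [addc, ha, leafZ]
    · simp only [labels, List.mem_cons, Ne.symm ha, false_or] at h0
      simp [addc, ha, leafZ, h h0]
  · simp [labelsList]
  · intro t ts h1 h2 h0
    by_cases ht : 0 ∈ t.labels
    · simp [addcList, ht, leafZList, h1 ht]
    · simp only [labelsList, List.mem_append, ht, false_or] at h0
      simp [addcList, ht, leafZList, h2 h0]

theorem md_addc_aux (c : ℕ) :
    (∀ t : OTree, (addc c t).md = t.md) ∧
    ∀ ts, ∀ a, mdList a (addcList c ts) = mdList a ts := by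
  apply ind2
  · intro a ts h
    by_cases ha : a = 0
    · simp [addc, ha, md, mdList]
    · simp [addc, ha, md, h]
  · simp [addcList]
  · intro t ts h1 h2 a
    by_cases ht : 0 ∈ t.labels
    · simp [addcList, ht, mdList, h1, root_addc]
    · simp [addcList, ht, mdList, h2]

theorem addcList_eq_nil (c : ℕ) (ts : List OTree) : addcList c ts = [] ↔ ts = [] := by
  cases ts
  · simp [addcList]
  · simp only [addcList]
    split_ifs <;> simp

theorem children_addc (c : ℕ) (t : OTree) (h : t.root ≠ 0) :
    (addc c t).children = [] ↔ t.children = [] := by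
  cases t
  simp only [root] at h
  simp [addc, h, children, addcList_eq_nil]

theorem isZ_addc_aux (c : ℕ) :
    (∀ t : OTree, (addc c t).IsZ ↔ t.IsZ) ∧
    ∀ ts, ∀ a, a ≠ 0 → (IsZList a (addcList c ts) ↔ IsZList a ts) := by
  apply ind2
  · intro a ts h
    by_cases ha : a = 0
    · simp [addc, ha, IsZ, IsZList, children]
    · simp [addc, ha, IsZ, h]
  · simp [addcList]
  · intro t ts h1 h2 a ha
    by_cases ht : 0 ∈ t.labels
    · by_cases hlt : t.root < a
      · simp [addcList, ht, IsZList, h1, root_addc, hlt]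
      · simp [addcList, ht, IsZList, root_addc, hlt, children_addc c t (by omega)]
    · simp [addcList, ht, IsZList, h2 a ha]

/-! ### Decomposition -/
theorem decomp_aux :
    (∀ t : OTree, t.root ≠ 0 → t.labels.Nodup → 0 ∈ t.labels → t.IsZ →
      (∃ t0, 0 ∉ t0.labels ∧ t ∈ ins t0) ∨ (∃ c t0, 0 ∈ t0.labels ∧ t = addc c t0)) ∧
    ∀ ts, ∀ a, a ≠ 0 → (labelsList ts).Nodup → 0 ∈ labelsList ts → IsZList a ts →
      (∃ ts0, 0 ∉ labelsList ts0 ∧ ts ∈ insList a ts0) ∨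
      (∃ c ts0, 0 ∈ labelsList ts0 ∧ ts = addcList c ts0) := by
  apply ind2
  · intro a ts h ha hn h0 hz
    simp only [root] at ha
    simp only [labels, List.nodup_cons] at hn
    simp only [labels, List.mem_cons, Ne.symm ha, false_or] at h0
    rcases h a ha hn.2 h0 hz with ⟨ts0, h1, h2⟩ | ⟨c, ts0, h1, h2⟩
    · left
      refine ⟨node a ts0, ?_, ?_⟩
      · simp [labels, h1, Ne.symm ha]
      · simp [ins, h2]
    · right
      exact ⟨c, node a ts0, by simp [labels, h1], by simp [addc, ha, h2]⟩
  · simp [labelsList]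
  · intro t ts h1 h2 a ha hn h0 hz
    simp only [labelsList, List.nodup_append] at hn
    obtain ⟨hn1, hn2, hn3⟩ := hn
    simp only [IsZList] at hz
    by_cases ht : 0 ∈ t.labels
    · have hts : 0 ∉ labelsList ts := fun h => hn3 0 ht 0 h rfl
      by_cases hr : t.root = 0
      · obtain ⟨hz1, -⟩ := hz
        rw [if_pos (by omega)] at hz1
        cases t with
        | node b us =>
          simp only [root] at hr
          subst hr
          cases us with
          | nil =>
            left
            refine ⟨ts, hts, ?_⟩
            cases ts <;> simp [insList]
          | cons u us =>
            right
            simp only [IsZ, IsZList, Nat.not_lt_zero, if_false] at hz1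
            cases u with
            | node c vs =>
              have hvs : vs = [] := hz1.1
              subst hvs
              exact ⟨c, node 0 us :: ts, by simp [labelsList, labels],
                by simp [addcList, labels, addc]⟩
      · by_cases hlt : t.root < a
        · rw [if_pos hlt] at hz
          rcases h1 hr hn1 ht hz.1 with ⟨t0, h3, h4⟩ | ⟨c, t0, h3, h4⟩
          · left
            refine ⟨t0 :: ts, by simp [labelsList, h3, hts], ?_⟩
            have := root_ins h4
            simp only [insList, ← this, hlt, if_true]
            simp [h4]
          · right
            exact ⟨c, t0 :: ts, by simp [labelsList, h3], by simp [addcList, h3, h4]⟩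
        · rw [if_neg hlt] at hz
          exfalso
          cases t with
          | node b us =>
            have hus : us = [] := hz.1
            subst hus
            simp only [labels, labelsList, List.mem_singleton] at ht
            exact hr ht.symm
    · simp only [labelsList, List.mem_append, ht, false_or] at h0
      rcases h2 a ha hn2 h0 hz.2 with ⟨ts0, h3, h4⟩ | ⟨c, ts0, h3, h4⟩
      · left
        exact ⟨t :: ts0, by simp [labelsList, h3, ht], by simp [insList, h4]⟩
      · right
        exact ⟨c, t :: ts0, by simp [labelsList, h3], by simp [addcList, ht, h4]⟩

theorem memZ_ins {n k : ℕ} {T T0 : OTree} (h0 : 0 ∉ T0.labels) (h : T ∈ ins T0) :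
    MemZ T n (k + 1) ↔ W n 0 k T0 := by
  unfold MemZ W
  rw [onRange_perm (Nat.zero_le n) (labels_ins_aux.1 T0 T h), isZ_ins_aux.1 T0 h0 T h,
    md_ins_aux.1 T0 h0 T h]
  simp

theorem memZ_addc {n k c : ℕ} {T0 : OTree} (h0 : 0 ∈ T0.labels) (hc : c ≤ n) :
    MemZ (addc c T0) n k ↔ W n c k T0 := by
  unfold MemZ W
  rw [onRange_perm hc ((labels_addc_aux c).1 T0 h0), (isZ_addc_aux c).1, (md_addc_aux c).1]

/-! ### Finiteness -/
theorem length_le_labelsList (ts : List OTree) : ts.length ≤ (labelsList ts).length := by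
  induction ts with
  | nil => simp
  | cons t ts ih => cases t; simp [labelsList, labels]; omega

theorem labels_sub {t : OTree} {ts : List OTree} (h : t ∈ ts) :
    t.labels.Sublist (labelsList ts) := by
  induction ts with
  | nil => simp at h
  | cons u us ih =>
    simp only [List.mem_cons] at h
    simp only [labelsList]
    rcases h with rfl | h
    · exact List.sublist_append_left _ _
    · exact (ih h).trans (List.sublist_append_right _ _)

theorem finite_bdd (n m : ℕ) :
    {T : OTree | (∀ x ∈ T.labels, x ≤ n) ∧ T.labels.length ≤ m}.Finite := by
  induction m with
  | zero =>
    convert Set.finite_empty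
    ext T
    cases T
    simp [labels]
  | succ m ih =>
    set S := {T : OTree | (∀ x ∈ T.labels, x ≤ n) ∧ T.labels.length ≤ m} with hS
    have : Finite S := ih
    have hL := List.finite_length_le S m
    refine (((Set.finite_Iic n).prod hL).image
      (fun p => node p.1 (p.2.map Subtype.val))).subset ?_
    rintro ⟨a, ts⟩ ⟨h1, h2⟩
    simp only [labels, List.mem_cons, List.length_cons] at h1 h2
    have hts : ∀ t ∈ ts, t ∈ S := by
      intro t ht
      have := labels_sub ht
      exact ⟨fun x hx => h1 x (Or.inr (this.subset hx)), by have := this.length_le; omega⟩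
    refine ⟨(a, ts.attach.map (fun t => ⟨t.1, hts t.1 t.2⟩)), ⟨h1 a (Or.inl rfl), ?_⟩, ?_⟩
    · have := length_le_labelsList ts
      simp; omega
    · simp

theorem labels_length {T : OTree} {n : ℕ} (h : T.OnRange n) : T.labels.length = n + 1 := by
  have : T.labels.toFinset = Finset.range (n + 1) := by
    ext i; simp [h.2 i, Nat.lt_succ_iff]
  rw [← List.toFinset_card_of_nodup h.1, this, Finset.card_range]

theorem finite_Z (n k : ℕ) : {T : OTree | MemZ T n k}.Finite :=
  (finite_bdd n (n + 1)).subset fun _ h =>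
    ⟨fun x hx => (h.1.2 x).1 hx, (labels_length h.1).le⟩

theorem root_ne_zero {T : OTree} {n k : ℕ} (h : MemZ T n (k + 1)) : T.root ≠ 0 := by
  intro hr
  cases T with
  | node a ts =>
    simp only [root] at hr
    subst hr
    have h2 := h.2.1
    have : ∀ ts, mdList 0 ts = [] := by
      intro ts
      induction ts with
      | nil => simp [mdList]
      | cons t ts ih => simp [mdList, ih]
    simp [md, this, size, labels, labelsList] at h2

open Classical in
theorem z_rec_aux (n k : ℕ) :
    (finite_Z (n + 1) (k + 1)).toFinset.card =
      (n + 1) * (finite_Z n (k + 1)).toFinset.card +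
        (n + k + 1) * (finite_Z n k).toFinset.card := by
  have hA : (finite_Z (n + 1) (k + 1)).toFinset.filter leafZ =
      (finite_Z n k).toFinset.biUnion (fun T => (ins (rel (skip 0) T)).toFinset) := by
    ext T
    simp only [Finset.mem_filter, Set.Finite.mem_toFinset, Set.mem_setOf_eq, Finset.mem_biUnion,
      List.mem_toFinset]
    constructor
    · rintro ⟨h, hl⟩
      rcases decomp_aux.1 T (root_ne_zero h) h.1.1 ((h.1.2 0).2 (Nat.zero_le _)) h.2.2 with
        ⟨t0, h1, h2⟩ | ⟨c, t0, h1, rfl⟩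
      · have hW := (memZ_ins h1 h2).1 h
        obtain ⟨T', rfl⟩ := W_surj _ _ _ _ hW
        exact ⟨T', (W_rel (n + 1) 0 k (by omega) (by omega) T').1 hW, h2⟩
      · exact absurd hl ((leafZ_addc_aux c).1 t0 h1)
    · rintro ⟨T', h1, h2⟩
      have hW := (W_rel (n + 1) 0 k (by omega) (by omega) T').2 h1
      have h0 : 0 ∉ (rel (skip 0) T').labels := by simp [hW.1.2]
      exact ⟨(memZ_ins h0 h2).2 hW, leafZ_ins_aux.1 _ h0 _ h2⟩
  have hB : (finite_Z (n + 1) (k + 1)).toFinset.filter (fun T => ¬ leafZ T) =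
      (Finset.Icc 1 (n + 1) ×ˢ (finite_Z n (k + 1)).toFinset).image
        (fun p => addc p.1 (rel (skip p.1) p.2)) := by
    ext T
    simp only [Finset.mem_filter, Set.Finite.mem_toFinset, Set.mem_setOf_eq, Finset.mem_image,
      Finset.mem_product, Finset.mem_Icc, Prod.exists]
    constructor
    · rintro ⟨h, hl⟩
      rcases decomp_aux.1 T (root_ne_zero h) h.1.1 ((h.1.2 0).2 (Nat.zero_le _)) h.2.2 with
        ⟨t0, h1, h2⟩ | ⟨c, t0, h1, rfl⟩
      · exact absurd (leafZ_ins_aux.1 _ h1 _ h2) hl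
      · have hp := (labels_addc_aux c).1 t0 h1
        have hc : c ≤ n + 1 := (h.1.2 c).1 (hp.mem_iff.2 (by simp))
        have hW := (memZ_addc h1 hc).1 h
        have hc0 : 0 ≠ c := ((hW.1.2 0).1 h1).2
        obtain ⟨T', rfl⟩ := W_surj _ _ _ _ hW
        exact ⟨c, T', ⟨⟨by omega, hc⟩, (W_rel (n + 1) c _ (by omega) hc T').1 hW⟩, rfl⟩
    · rintro ⟨c, T', ⟨⟨hc1, hc⟩, h1⟩, rfl⟩
      have hW := (W_rel (n + 1) c _ (by omega) hc T').2 h1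
      have h0 : 0 ∈ (rel (skip c) T').labels := by rw [hW.1.2]; omega
      exact ⟨(memZ_addc h0 hc).2 hW, (leafZ_addc_aux c).1 _ h0⟩
  rw [← Finset.card_filter_add_card_filter_not leafZ, hA, hB, Finset.card_biUnion,
    Finset.card_image_of_injOn, Finset.card_product, Nat.card_Icc, add_comm]
  · congr 1
    rw [mul_comm, ← smul_eq_mul, ← Finset.sum_const]
    refine Finset.sum_congr rfl fun T hT => ?_
    simp only [Set.Finite.mem_toFinset, Set.mem_setOf_eq] at hT
    have hW := (W_rel (n + 1) 0 k (by omega) (by omega) T).2 hT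
    have h0 : 0 ∉ (rel (skip 0) T).labels := by simp [hW.1.2]
    rw [List.toFinset_card_of_nodup (nodup_ins_aux.1 _ h0)]
    have h1 := length_ins_aux.1 _ hW.2.2
    rw [hW.2.1, size, labels_rel, List.length_map, labels_length hT.1] at h1
    omega
  · rintro ⟨c, T⟩ h ⟨c', T'⟩ h' he
    simp only [Finset.coe_product, Set.mem_prod, Finset.mem_coe, Finset.mem_Icc,
      Set.Finite.mem_toFinset, Set.mem_setOf_eq] at h h' he
    have hW := (W_rel (n + 1) c _ (by omega) h.1.2 T).2 h.2
    have hW' := (W_rel (n + 1) c' _ (by omega) h'.1.2 T').2 h'.2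
    have h0 : 0 ∈ (rel (skip c) T).labels := by rw [hW.1.2]; omega
    have h0' : 0 ∈ (rel (skip c') T').labels := by rw [hW'.1.2]; omega
    have e1 : rel (skip c) T = rel (skip c') T' := by
      rw [← (rem_addc_aux c).1 _ h0, he, (rem_addc_aux c').1 _ h0']
    have e2 : c = c' := by
      have a1 := hW.1.2 c
      rw [e1, hW'.1.2 c] at a1
      by_contra hne
      simp [h.1.2, hne] at a1
    subst e2
    rw [(rel_inj_aux _ (skip_mono c).injective).1 _ _ e1]
  · intro T hT T' hT' hne
    simp only [Finset.mem_coe, Set.Finite.mem_toFinset, Set.mem_setOf_eq] at hT hT'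
    have hW := (W_rel (n + 1) 0 k (by omega) (by omega) T).2 hT
    have h0 : 0 ∉ (rel (skip 0) T).labels := by simp [hW.1.2]
    have hW' := (W_rel (n + 1) 0 k (by omega) (by omega) T').2 hT'
    have h0' : 0 ∉ (rel (skip 0) T').labels := by simp [hW'.1.2]
    rw [Function.onFun, Finset.disjoint_left]
    intro U hU hU'
    rw [List.mem_toFinset] at hU hU'
    apply hne
    apply (rel_inj_aux _ (skip_mono 0).injective).1
    rw [← del_ins_aux.1 _ h0 _ hU, del_ins_aux.1 _ h0' _ hU']

theorem card_Z (n k : ℕ) :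
    Nat.card {T : OTree // MemZ T n k} = (finite_Z n k).toFinset.card :=
  Nat.card_eq_card_finite_toFinset (finite_Z n k)

end OTree


/-- The numbers `z(n,k) = |Z_{n,k}|` satisfy the recursion
`z(n,k) = n·z(n-1,k) + (n+k-1)·z(n-1,k-1)` for `1 ≤ k < n`. -/
theorem z_recursion (n k : ℕ) (hk : 1 ≤ k) (hkn : k < n) :
    Nat.card {T : OTree // MemZ T n k} =
      n * Nat.card {T : OTree // MemZ T (n - 1) k} +
        (n + k - 1) * Nat.card {T : OTree // MemZ T (n - 1) (k - 1)} := by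
  obtain ⟨m, rfl⟩ : ∃ m, n = m + 1 := ⟨n - 1, by omega⟩
  obtain ⟨j, rfl⟩ : ∃ j, k = j + 1 := ⟨k - 1, by omega⟩
  simp only [OTree.card_Z, Nat.add_sub_cancel]
  rw [OTree.z_rec_aux]
  congr 2
  omega
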